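/- Consider the elastic von Karman beam system on [L₀,L]×[0,T+h] and its time-difference (u_d, v_d) with step h, and let M > 0. Assume the overdetermined boundary conditions u_d(L₀,t) = u_dx(L₀,t) = u_dxx(L₀,t) = u_dxxx(L₀,t) = v_d(L₀,t) = v_dx(L₀,t) = 0 and u_d(L,t) = u_dxx(L,t) = v_d(L,t) = 0 for all t ∈ [0,T]. Then there exists T₀ > 0, depending only on β₂, μ₂, λ₂, ρ₂, L₀, L, h, M, such that if T ≥ T₀ then for every M-bounded solution (u,v) one has u_d ≡ 0 and v_d ≡ 0 on [L₀,L]×[0,T] (unique continuation for the overdetermined problem). -/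

import Mathlib

open MeasureTheory

noncomputable section

/-- Partial derivative in the first (space) variable. -/
def pdx (f : ℝ → ℝ → ℝ) : ℝ → ℝ → ℝ := fun x t => deriv (fun y => f y t) x

/-- Partial derivative in the second (time) variable. -/
def pdt (f : ℝ → ℝ → ℝ) : ℝ → ℝ → ℝ := fun x t => deriv (fun s => f x s) t

/-- Time difference with step `h`. -/
def tdiff (h : ℝ) (f : ℝ → ℝ → ℝ) : ℝ → ℝ → ℝ := fun x t => f x (t + h) - f x t

/-- The elastic full von Karman beam system on `[L₀,L] × [0,Th]`. -/
def VKBeam (β₂ μ₂ lam₂ ρ₂ L₀ L Th : ℝ) (u v : ℝ → ℝ → ℝ) : Prop :=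
  ∀ x ∈ Set.Icc L₀ L, ∀ t ∈ Set.Icc (0:ℝ) Th,
    β₂ * pdt (pdt u) x t - μ₂ * pdx (pdx (pdt (pdt u))) x t
        + lam₂ * pdx (pdx (pdx (pdx u))) x t
        - pdx (fun y s => pdx u y s * (pdx v y s + (pdx u y s) ^ 2 / 2)) x t = 0 ∧
    ρ₂ * pdt (pdt v) x t - pdx (fun y s => pdx v y s + (pdx u y s) ^ 2 / 2) x t = 0

/-- `f` has all partial derivatives of order at most 4 bounded by `M` on
`[L₀,L] × [0,Th]`. -/
def MBounded (M L₀ L Th : ℝ) (f : ℝ → ℝ → ℝ) : Prop :=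
  ∀ k : ℕ, k ≤ 4 → ∀ x ∈ Set.Icc L₀ L, ∀ t ∈ Set.Icc (0:ℝ) Th,
    ‖iteratedFDeriv ℝ k (Function.uncurry f) (x, t)‖ ≤ M

end

open scoped ContDiff

def Sm (f : ℝ → ℝ → ℝ) : Prop := ContDiff ℝ ∞ (Function.uncurry f)

theorem Sm.of_nat {f : ℝ → ℝ → ℝ} (h : ∀ n : ℕ, ContDiff ℝ n (Function.uncurry f)) : Sm f :=
  contDiff_infty.2 h

theorem Sm.hdx {f : ℝ → ℝ → ℝ} (h : Sm f) (x t : ℝ) :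
    HasDerivAt (fun y => f y t) (fderiv ℝ (Function.uncurry f) (x, t) (1, 0)) x := by
  have h1 : HasFDerivAt (Function.uncurry f) (fderiv ℝ (Function.uncurry f) (x, t)) (x, t) :=
    (h.differentiable (by simp)).differentiableAt.hasFDerivAt
  have h2 : HasDerivAt (fun y : ℝ => (y, t)) ((1 : ℝ), (0 : ℝ)) x :=
    (hasDerivAt_id x).prodMk (hasDerivAt_const x t)
  exact h1.comp_hasDerivAt (f := fun y : ℝ => (y, t)) x h2

theorem Sm.hdt {f : ℝ → ℝ → ℝ} (h : Sm f) (x t : ℝ) :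
    HasDerivAt (fun s => f x s) (fderiv ℝ (Function.uncurry f) (x, t) (0, 1)) t := by
  have h1 : HasFDerivAt (Function.uncurry f) (fderiv ℝ (Function.uncurry f) (x, t)) (x, t) :=
    (h.differentiable (by simp)).differentiableAt.hasFDerivAt
  have h2 : HasDerivAt (fun s : ℝ => (x, s)) ((0 : ℝ), (1 : ℝ)) t :=
    (hasDerivAt_const t x).prodMk (hasDerivAt_id t)
  exact h1.comp_hasDerivAt (f := fun s : ℝ => (x, s)) t h2

theorem Sm.dx {f : ℝ → ℝ → ℝ} (h : Sm f) (x t : ℝ) :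
    HasDerivAt (fun y => f y t) (pdx f x t) x := by
  have := h.hdx x t
  rwa [← this.deriv] at this

theorem Sm.dt {f : ℝ → ℝ → ℝ} (h : Sm f) (x t : ℝ) :
    HasDerivAt (fun s => f x s) (pdt f x t) t := by
  have := h.hdt x t
  rwa [← this.deriv] at this

theorem Sm.pdx_eq {f : ℝ → ℝ → ℝ} (h : Sm f) (x t : ℝ) :
    pdx f x t = fderiv ℝ (Function.uncurry f) (x, t) (1, 0) := (h.hdx x t).deriv

theorem Sm.pdt_eq {f : ℝ → ℝ → ℝ} (h : Sm f) (x t : ℝ) :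
    pdt f x t = fderiv ℝ (Function.uncurry f) (x, t) (0, 1) := (h.hdt x t).deriv

theorem Sm.fd {f : ℝ → ℝ → ℝ} (h : Sm f) : ContDiff ℝ ∞ (fderiv ℝ (Function.uncurry f)) :=
  ContDiff.fderiv_right h (by simp)

theorem Sm.uncurry_pdx {f : ℝ → ℝ → ℝ} (h : Sm f) :
    Function.uncurry (pdx f) = fun p => fderiv ℝ (Function.uncurry f) p (1, 0) := by
  ext ⟨x, t⟩; exact h.pdx_eq x t

theorem Sm.uncurry_pdt {f : ℝ → ℝ → ℝ} (h : Sm f) :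
    Function.uncurry (pdt f) = fun p => fderiv ℝ (Function.uncurry f) p (0, 1) := by
  ext ⟨x, t⟩; exact h.pdt_eq x t

theorem Sm.x {f : ℝ → ℝ → ℝ} (h : Sm f) : Sm (pdx f) := by
  unfold Sm
  rw [h.uncurry_pdx]
  exact h.fd.clm_apply contDiff_const

theorem Sm.t {f : ℝ → ℝ → ℝ} (h : Sm f) : Sm (pdt f) := by
  unfold Sm
  rw [h.uncurry_pdt]
  exact h.fd.clm_apply contDiff_const

theorem Sm.comm {f : ℝ → ℝ → ℝ} (h : Sm f) : pdx (pdt f) = pdt (pdx f) := by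
  ext x t
  rw [h.t.pdx_eq, h.x.pdt_eq, h.uncurry_pdx, h.uncurry_pdt]
  have hd : DifferentiableAt ℝ (fderiv ℝ (Function.uncurry f)) (x, t) :=
    (h.fd.differentiable (by simp)).differentiableAt
  have hs : IsSymmSndFDerivAt ℝ (Function.uncurry f) (x, t) :=
    (ContDiff.contDiffAt (contDiff_infty.1 h 2)).isSymmSndFDerivAt (by simp)
  rw [fderiv_clm_apply hd (by fun_prop), fderiv_clm_apply hd (by fun_prop)]
  simpa using hs (1, 0) (0, 1)

theorem Sm.add {f g : ℝ → ℝ → ℝ} (hf : Sm f) (hg : Sm g) : Sm (fun x t => f x t + g x t) :=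
  ContDiff.add hf hg

theorem Sm.sub {f g : ℝ → ℝ → ℝ} (hf : Sm f) (hg : Sm g) : Sm (fun x t => f x t - g x t) :=
  ContDiff.sub hf hg

theorem Sm.mul {f g : ℝ → ℝ → ℝ} (hf : Sm f) (hg : Sm g) : Sm (fun x t => f x t * g x t) :=
  ContDiff.mul hf hg

theorem Sm.cmul {f : ℝ → ℝ → ℝ} (c : ℝ) (hf : Sm f) : Sm (fun x t => c * f x t) :=
  ContDiff.mul contDiff_const hf

theorem Sm.pow {f : ℝ → ℝ → ℝ} (n : ℕ) (hf : Sm f) : Sm (fun x t => f x t ^ n) :=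
  ContDiff.pow hf n

theorem Sm.shift {f : ℝ → ℝ → ℝ} (h : ℝ) (hf : Sm f) : Sm (fun x t => f x (t + h)) := by
  have : ContDiff ℝ ∞ (fun p : ℝ × ℝ => (p.1, p.2 + h)) := by fun_prop
  exact ContDiff.comp hf this

theorem Sm.swap {f : ℝ → ℝ → ℝ} (hf : Sm f) : Sm (fun x t => f t x) := by
  have : ContDiff ℝ ∞ (fun p : ℝ × ℝ => (p.2, p.1)) := by fun_prop
  exact ContDiff.comp hf this

theorem Sm.rev {f : ℝ → ℝ → ℝ} (hf : Sm f) : Sm (fun x t => f x (-t)) := by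
  have : ContDiff ℝ ∞ (fun p : ℝ × ℝ => (p.1, -p.2)) := by fun_prop
  exact ContDiff.comp hf this

theorem Sm.tdiff {f : ℝ → ℝ → ℝ} (h : ℝ) (hf : Sm f) : Sm (tdiff h f) :=
  (hf.shift h).sub hf

theorem Sm.cont {f : ℝ → ℝ → ℝ} (hf : Sm f) : Continuous (Function.uncurry f) :=
  ContDiff.continuous hf

theorem Sm.cont_t {f : ℝ → ℝ → ℝ} (hf : Sm f) (x : ℝ) : Continuous (f x) :=
  hf.cont.comp (by fun_prop : Continuous fun t : ℝ => (x, t))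

theorem Sm.bdd {f : ℝ → ℝ → ℝ} (hf : Sm f) (a b c d : ℝ) :
    ∃ K, ∀ x ∈ Set.Icc a b, ∀ t ∈ Set.Icc c d, |f x t| ≤ K := by
  obtain ⟨K, hK⟩ := (isCompact_Icc.prod isCompact_Icc : IsCompact (Set.Icc a b ×ˢ Set.Icc c d)).exists_bound_of_continuousOn
    hf.cont.continuousOn
  exact ⟨K, fun x hx t ht => hK (x, t) ⟨hx, ht⟩⟩

theorem Sm.pdx_tdiff {f : ℝ → ℝ → ℝ} (h : ℝ) (hf : Sm f) :
    pdx (_root_.tdiff h f) = _root_.tdiff h (pdx f) := by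
  ext x t
  exact ((hf.dx x (t + h)).sub (hf.dx x t)).deriv

theorem Sm.pdt_tdiff {f : ℝ → ℝ → ℝ} (h : ℝ) (hf : Sm f) :
    pdt (_root_.tdiff h f) = _root_.tdiff h (pdt f) := by
  ext x t
  have := (hf.dt x (t + h)).comp_add_const t h
  exact (this.sub (hf.dt x t)).deriv

theorem hasDerivAt_int {G : ℝ → ℝ → ℝ} (hG : Sm G) (r0 r1 s : ℝ) :
    HasDerivAt (fun s => ∫ r in r0..r1, G s r) (∫ r in r0..r1, pdx G s r) s := by
  obtain ⟨K, hK⟩ := hG.x.bdd (s - 1) (s + 1) (min r0 r1) (max r0 r1)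
  refine (intervalIntegral.hasDerivAt_integral_of_dominated_loc_of_deriv_le
    (F := G) (F' := pdx G) (s := Set.Icc (s - 1) (s + 1)) (bound := fun _ => K)
    (Icc_mem_nhds (by linarith) (by linarith)) ?_ ?_ ?_ ?_ ?_ ?_).2
  · exact Filter.Eventually.of_forall fun x => (hG.cont_t x).aestronglyMeasurable
  · exact (hG.cont_t s).intervalIntegrable _ _
  · exact (hG.x.cont_t s).aestronglyMeasurable
  · refine Filter.Eventually.of_forall fun r hr x hx => hK x hx r ?_
    exact Set.Ioc_subset_Icc_self hr
  · simp
  · exact Filter.Eventually.of_forall fun r hr x hx => hG.dx x r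

theorem gronwall0 {E E' : ℝ → ℝ} {a b C : ℝ} (hE : ∀ s, HasDerivAt E (E' s) s)
    (hle : ∀ s ∈ Set.Icc a b, E' s ≤ C * E s) (h0 : E a ≤ 0) :
    ∀ s ∈ Set.Icc a b, E s ≤ 0 := by
  intro s hs
  have hd : ∀ s, HasDerivAt (fun s => Real.exp (-C * s) * E s)
      (Real.exp (-C * s) * (E' s - C * E s)) s := by
    intro s
    have h1 : HasDerivAt (fun s => Real.exp (-C * s)) (Real.exp (-C * s) * (-C * 1)) s :=
      ((hasDerivAt_id s).const_mul (-C)).exp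
    refine (h1.mul (hE s)).congr_deriv ?_
    ring
  have hanti : AntitoneOn (fun s => Real.exp (-C * s) * E s) (Set.Icc a b) := by
    apply antitoneOn_of_deriv_nonpos (convex_Icc a b)
    · exact fun x _ => (hd x).continuousAt.continuousWithinAt
    · exact fun x _ => (hd x).differentiableAt.differentiableWithinAt
    · intro x hx
      rw [(hd x).deriv]
      have := hle x (interior_subset hx)
      exact mul_nonpos_of_nonneg_of_nonpos (Real.exp_pos _).le (by linarith)
  have h2 := hanti (Set.left_mem_Icc.2 (hs.1.trans hs.2)) hs hs.1
  have h3 : Real.exp (-C * a) * E a ≤ 0 :=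
    mul_nonpos_of_nonneg_of_nonpos (Real.exp_pos _).le h0
  by_contra h4
  push Not at h4
  have := mul_pos (Real.exp_pos (-C * s)) h4
  simp only at h2
  linarith

/-- Generic energy lemma. -/
theorem energy {G F : ℝ → ℝ → ℝ} (hG : Sm G) (hF : Sm F) {a b r0 r1 C : ℝ} (hr : r0 < r1)
    (hle : ∀ s ∈ Set.Icc a b, ∀ r ∈ Set.Icc r0 r1, pdx G s r ≤ C * G s r + pdt F s r)
    (hF0 : ∀ s ∈ Set.Icc a b, F s r0 = 0) (hF1 : ∀ s ∈ Set.Icc a b, F s r1 = 0)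
    (hpos : ∀ s ∈ Set.Icc a b, ∀ r ∈ Set.Icc r0 r1, 0 ≤ G s r)
    (h0 : ∀ r ∈ Set.Icc r0 r1, G a r = 0) :
    ∀ s ∈ Set.Icc a b, ∀ r ∈ Set.Icc r0 r1, G s r = 0 := by
  have key : ∀ s ∈ Set.Icc a b, (∫ r in r0..r1, G s r) ≤ 0 := by
    apply gronwall0 (C := C) (hasDerivAt_int hG r0 r1)
    · intro s hs
      have h1 : (∫ r in r0..r1, pdx G s r) ≤ ∫ r in r0..r1, (C * G s r + pdt F s r) := by
        apply intervalIntegral.integral_mono_on hr.le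
        · exact (hG.x.cont_t s).intervalIntegrable _ _
        · exact (((hG.cmul C).add hF.t).cont_t s).intervalIntegrable _ _
        · exact hle s hs
      rw [intervalIntegral.integral_add (((hG.cmul C).cont_t s).intervalIntegrable _ _)
        ((hF.t.cont_t s).intervalIntegrable _ _), intervalIntegral.integral_const_mul,
        intervalIntegral.integral_eq_sub_of_hasDerivAt (fun r _ => hF.dt s r)
          ((hF.t.cont_t s).intervalIntegrable _ _), hF0 s hs, hF1 s hs] at h1
      simpa using h1
    · apply le_of_eq
      rw [intervalIntegral.integral_congr (g := fun _ => 0)]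
      · simp
      · intro r hr'
        rw [Set.uIcc_of_le hr.le] at hr'
        exact h0 r hr'
  intro s hs r hr'
  by_contra hne
  have hp : 0 < G s r := lt_of_le_of_ne (hpos s hs r hr') (Ne.symm hne)
  have := intervalIntegral.integral_pos hr (hG.cont_t s).continuousOn
    (fun r h => hpos s hs r (Set.Ioc_subset_Icc_self h)) ⟨r, hr', hp⟩
  linarith [key s hs]

theorem energyW {e f φ : ℝ → ℝ → ℝ} (he : Sm e) (hf : Sm f) (hφ : Sm φ)
    {a b r0 r1 C c : ℝ} (hr : r0 < r1)
    (hle : ∀ s ∈ Set.Icc a b, ∀ r ∈ Set.Icc r0 r1, pdx e s r ≤ C * e s r + pdt f s r)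
    (hfe : ∀ s ∈ Set.Icc a b, ∀ r ∈ Set.Icc r0 r1, |f s r| ≤ c * e s r)
    (hφφ : ∀ s ∈ Set.Icc a b, ∀ r ∈ Set.Icc r0 r1, c * |pdt φ s r| ≤ - pdx φ s r)
    (hF0 : ∀ s ∈ Set.Icc a b, φ s r0 = 0) (hF1 : ∀ s ∈ Set.Icc a b, φ s r1 = 0)
    (hφ0 : ∀ s r, 0 ≤ φ s r)
    (hpos : ∀ s r, 0 ≤ e s r)
    (h0 : ∀ r ∈ Set.Icc r0 r1, φ a r * e a r = 0) :
    ∀ s ∈ Set.Icc a b, ∀ r ∈ Set.Icc r0 r1, φ s r * e s r = 0 := by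
  apply energy (hφ.mul he) (hφ.mul hf) (C := C) hr
  · intro s hs r hr
    have h1 : pdx (fun s r => φ s r * e s r) s r = pdx φ s r * e s r + φ s r * pdx e s r :=
      ((hφ.dx s r).mul (he.dx s r)).deriv
    have h2 : pdt (fun s r => φ s r * f s r) s r = pdt φ s r * f s r + φ s r * pdt f s r :=
      ((hφ.dt s r).mul (hf.dt s r)).deriv
    rw [h1, h2]
    have h3 := mul_le_mul_of_nonneg_left (hle s hs r hr) (hφ0 s r)
    have h4 : -(pdt φ s r * f s r) ≤ |pdt φ s r| * (c * e s r) := by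
      calc -(pdt φ s r * f s r) ≤ |pdt φ s r * f s r| := neg_le_abs _
        _ = |pdt φ s r| * |f s r| := abs_mul _ _
        _ ≤ _ := mul_le_mul_of_nonneg_left (hfe s hs r hr) (abs_nonneg _)
    have h5 := mul_le_mul_of_nonneg_right (hφφ s hs r hr) (hpos s r)
    linarith
  · intro s hs; simp [hF0 s hs]
  · intro s hs; simp [hF1 s hs]
  · intro s hs r hr; exact mul_nonneg (hφ0 s r) (hpos s r)
  · exact h0

theorem energyT {e F : ℝ → ℝ → ℝ} (he : Sm e) (hF : Sm F) {L₀ L T C t₀ : ℝ} (hL : L₀ < L)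
    (ht₀ : t₀ ∈ Set.Icc 0 T)
    (hle : ∀ x ∈ Set.Icc L₀ L, ∀ t ∈ Set.Icc 0 T, |pdt e x t - pdx F x t| ≤ C * e x t)
    (hF0 : ∀ t ∈ Set.Icc 0 T, F L₀ t = 0) (hF1 : ∀ t ∈ Set.Icc 0 T, F L t = 0)
    (hpos : ∀ x t, 0 ≤ e x t)
    (h0 : ∀ x ∈ Set.Icc L₀ L, e x t₀ = 0) :
    ∀ x ∈ Set.Icc L₀ L, ∀ t ∈ Set.Icc 0 T, e x t = 0 := by
  have fwd := energy (a := t₀) (b := T) (C := C) he.swap hF.swap hL (by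
      intro s hs r hr
      have h := hle r hr s ⟨ht₀.1.trans hs.1, hs.2⟩
      change pdt e r s ≤ C * e r s + pdx F r s
      linarith [(abs_le.1 h).2])
    (fun s hs => hF0 s ⟨ht₀.1.trans hs.1, hs.2⟩) (fun s hs => hF1 s ⟨ht₀.1.trans hs.1, hs.2⟩)
    (fun s _ r _ => hpos r s) (fun r hr => h0 r hr)
  have bwd := energy (a := -t₀) (b := 0) (C := C) he.rev.swap (hF.rev.cmul (-1)).swap hL (by
      intro s hs r hr
      have h := hle r hr (-s) ⟨by linarith [hs.2], by linarith [hs.1, ht₀.2]⟩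
      have h1 : pdx (fun x t => e t (-x)) s r = - pdt e r (-s) := by
        have h3 := (he.dt r (-s)).comp s (hasDerivAt_neg s)
        have h4 := h3.deriv
        rw [mul_neg_one] at h4
        exact h4
      have h2 : pdt (fun x t => (-1) * F t (-x)) s r = - pdx F r (-s) := by
        have h4 := ((hF.dx r (-s)).const_mul (-1)).deriv
        rw [neg_one_mul] at h4
        exact h4
      rw [h1, h2]
      change _ ≤ C * e r (-s) + _
      linarith [(abs_le.1 h).1])
    (fun s hs => by
      have := hF0 (-s) ⟨by linarith [hs.2], by linarith [hs.1, ht₀.2]⟩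
      simp [this])
    (fun s hs => by
      have := hF1 (-s) ⟨by linarith [hs.2], by linarith [hs.1, ht₀.2]⟩
      simp [this])
    (fun s _ r _ => hpos r (-s)) (fun r hr => by simpa using h0 r hr)
  intro x hx t ht
  rcases le_total t₀ t with h | h
  · exact fwd t ⟨h, ht.2⟩ x hx
  · have := bwd (-t) ⟨by linarith, by linarith [ht.1]⟩ x hx
    simpa using this

theorem pdt_zero {g : ℝ → ℝ → ℝ} (hg : Sm g) {x T : ℝ} (hT : 0 < T)
    (h : ∀ t ∈ Set.Icc 0 T, g x t = 0) : ∀ t ∈ Set.Icc 0 T, pdt g x t = 0 := by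
  have h1 : Set.Ioo 0 T ⊆ {t | pdt g x t = 0} := by
    intro t ht
    have : (fun s => g x s) =ᶠ[nhds t] fun _ => 0 := by
      filter_upwards [isOpen_Ioo.mem_nhds ht] with s hs
      exact h s ⟨hs.1.le, hs.2.le⟩
    change deriv (fun s => g x s) t = 0
    rw [this.deriv_eq]; simp
  have hc : IsClosed {t | pdt g x t = 0} := isClosed_eq (hg.t.cont_t x) continuous_const
  have h2 := closure_minimal h1 hc
  rw [closure_Ioo hT.ne] at h2
  exact h2

theorem Sm.sqx {g : ℝ → ℝ → ℝ} (hg : Sm g) (x t : ℝ) :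
    HasDerivAt (fun y => g y t ^ 2) (2 * g x t * pdx g x t) x := by
  exact ((hg.dx x t).pow 2).congr_deriv (by simp)

theorem Sm.sqt {g : ℝ → ℝ → ℝ} (hg : Sm g) (x t : ℝ) :
    HasDerivAt (fun y => g x y ^ 2) (2 * g x t * pdt g x t) t := by
  exact ((hg.dt x t).pow 2).congr_deriv (by simp)

/-- The cutoff weight. -/
noncomputable def wt (T c L₀ : ℝ) : ℝ → ℝ → ℝ := fun x t =>
  expNegInvGlue (T ^ 2 / 4 - (t - T / 2) ^ 2 - c * T * (x - L₀))

theorem wt_sm (T c L₀ : ℝ) : Sm (wt T c L₀) := by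
  have h : ContDiff ℝ ∞ (fun p : ℝ × ℝ => T ^ 2 / 4 - (p.2 - T / 2) ^ 2 - c * T * (p.1 - L₀)) := by
    fun_prop
  exact (expNegInvGlue.contDiff (n := ⊤)).comp h

theorem wt_ineq {T c L₀ : ℝ} (hc : 0 ≤ c) (x t : ℝ) (ht : t ∈ Set.Icc 0 T) :
    c * |pdt (wt T c L₀) x t| ≤ - pdx (wt T c L₀) x t := by
  have hg : ∀ y, HasDerivAt expNegInvGlue (deriv expNegInvGlue y) y := fun y =>
    ((expNegInvGlue.contDiff (n := ⊤)).differentiable (by simp)).differentiableAt.hasDerivAt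
  have hg0 : ∀ y, 0 ≤ deriv expNegInvGlue y := fun y => expNegInvGlue.monotone.deriv_nonneg
  set Y := T ^ 2 / 4 - (t - T / 2) ^ 2 - c * T * (x - L₀) with hY
  have h1 : HasDerivAt (fun y => T ^ 2 / 4 - (t - T / 2) ^ 2 - c * T * (y - L₀)) (-(c * T)) x := by
    refine ((((hasDerivAt_id x).sub_const L₀).const_mul (c * T)).const_sub _).congr_deriv ?_
    ring
  have h2 : HasDerivAt (fun s => T ^ 2 / 4 - (s - T / 2) ^ 2 - c * T * (x - L₀))
      (-(2 * (t - T / 2))) t := by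
    refine (((((hasDerivAt_id t).sub_const (T / 2)).pow 2).const_sub _).sub_const _).congr_deriv ?_
    simp
  have h3 : pdx (wt T c L₀) x t = deriv expNegInvGlue Y * (-(c * T)) :=
    ((hg Y).comp x h1).deriv
  have h4 : pdt (wt T c L₀) x t = deriv expNegInvGlue Y * (-(2 * (t - T / 2))) :=
    ((hg Y).comp t h2).deriv
  rw [h3, h4, abs_mul, abs_of_nonneg (hg0 Y)]
  have h5 : |(-(2 * (t - T / 2)))| ≤ T := abs_le.2 ⟨by linarith [ht.2], by linarith [ht.1]⟩
  have h6 := mul_le_mul_of_nonneg_left h5 (mul_nonneg hc (hg0 Y))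
  linarith

theorem tm {c x y K N : ℝ} (hc : |c| ≤ K) (hx : x ^ 2 ≤ N) (hy : y ^ 2 ≤ N) :
    |c * x * y| ≤ K * N := by
  have h1 : |x * y| ≤ N := by
    rw [abs_mul]
    have := two_mul_le_add_sq |x| |y|
    rw [sq_abs, sq_abs] at this
    linarith
  rw [mul_assoc, abs_mul]
  exact mul_le_mul hc h1 (abs_nonneg _) ((abs_nonneg _).trans hc)

theorem dm {a m X S : ℝ} (hm : 0 < m) (ha : m ≤ a) (h : a * X ^ 2 ≤ S) : X ^ 2 ≤ S / m := by
  rw [le_div_iff₀ hm]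
  nlinarith [sq_nonneg X]

theorem alg_side {μ lam ρ m K k : ℝ} (hm : 0 < m) (hm1 : m ≤ 1) (hmμ : m ≤ μ) (hml : m ≤ lam)
    (hmρ : m ≤ ρ) {Wxx Wxt Zx Zt Wx P Q W Wt Z A B a ax b : ℝ} (hK1 : 1 ≤ K)
    (hA : |A| ≤ K) (hB : |B| ≤ K) (ha : |a| ≤ K) (hax : |ax| ≤ K) (hk : |k| ≤ K) (hb : |b| ≤ K) :
    Wxx * (Q - k * Wx + (A * Wx + B * Zx)) - Zx * (ax * Wx + a * Wxx) + Wx * Wxx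
      + P * (Q - k * Wx + (A * Wx + B * Zx)) + b * Q * P + W * Wx + Wt * Wxt + Z * Zx
    ≤ (30 * K / m) * ((lam * Wxx ^ 2 + μ * Wxt ^ 2 + Zx ^ 2 + ρ * Zt ^ 2 + Wx ^ 2 + P ^ 2 + Q ^ 2
      + W ^ 2 + Wt ^ 2 + Z ^ 2) / 2) := by
  set S := lam * Wxx ^ 2 + μ * Wxt ^ 2 + Zx ^ 2 + ρ * Zt ^ 2 + Wx ^ 2 + P ^ 2 + Q ^ 2
      + W ^ 2 + Wt ^ 2 + Z ^ 2 with hS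
  have n1 : 0 ≤ lam * Wxx ^ 2 := mul_nonneg (by linarith) (sq_nonneg _)
  have n2 : 0 ≤ μ * Wxt ^ 2 := mul_nonneg (by linarith) (sq_nonneg _)
  have n3 : 0 ≤ ρ * Zt ^ 2 := mul_nonneg (by linarith) (sq_nonneg _)
  have n4 := sq_nonneg Zx
  have n5 := sq_nonneg Wx
  have n6 := sq_nonneg P
  have n7 := sq_nonneg Q
  have n8 := sq_nonneg W
  have n9 := sq_nonneg Wt
  have n0 := sq_nonneg Z
  have b1 : Wxx ^ 2 ≤ S / m := dm hm hml (by linarith)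
  have b2 : Wxt ^ 2 ≤ S / m := dm hm hmμ (by linarith)
  have b4 : Zx ^ 2 ≤ S / m := dm hm hm1 (by linarith)
  have b5 : Wx ^ 2 ≤ S / m := dm hm hm1 (by linarith)
  have b6 : P ^ 2 ≤ S / m := dm hm hm1 (by linarith)
  have b7 : Q ^ 2 ≤ S / m := dm hm hm1 (by linarith)
  have b8 : W ^ 2 ≤ S / m := dm hm hm1 (by linarith)
  have b9 : Wt ^ 2 ≤ S / m := dm hm hm1 (by linarith)
  have b0 : Z ^ 2 ≤ S / m := dm hm hm1 (by linarith)
  have h1 : |(1:ℝ)| ≤ K := by simpa using hK1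
  have e : (30 * K / m) * (S / 2) = 15 * (K * (S / m)) := by ring
  rw [e]
  have t1 := (abs_le.1 (tm h1 b1 b7)).2
  have t2 := (abs_le.1 (tm hk b1 b5)).1
  have t3 := (abs_le.1 (tm hA b1 b5)).2
  have t4 := (abs_le.1 (tm hB b1 b4)).2
  have t5 := (abs_le.1 (tm hax b4 b5)).1
  have t6 := (abs_le.1 (tm ha b4 b1)).1
  have t7 := (abs_le.1 (tm h1 b5 b1)).2
  have t8 := (abs_le.1 (tm h1 b6 b7)).2
  have t9 := (abs_le.1 (tm hk b6 b5)).1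
  have t10 := (abs_le.1 (tm hA b6 b5)).2
  have t11 := (abs_le.1 (tm hB b6 b4)).2
  have t12 := (abs_le.1 (tm hb b7 b6)).2
  have t13 := (abs_le.1 (tm h1 b8 b5)).2
  have t14 := (abs_le.1 (tm h1 b9 b2)).2
  have t15 := (abs_le.1 (tm h1 b0 b4)).2
  linarith

theorem alg_time {β μ lam ρ m K : ℝ} (hm : 0 < m) (hm1 : m ≤ 1) (hmμ : m ≤ μ) (hml : m ≤ lam)
    (hmρ : m ≤ ρ) (hmβ : m ≤ β) {Wxx Wxt Zx Zt Wx W Wt Z A B a ax : ℝ} (hK1 : 1 ≤ K)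
    (hA : |A| ≤ K) (hB : |B| ≤ K) (ha : |a| ≤ K) (hax : |ax| ≤ K) :
    |- Wxt * (A * Wx + B * Zx) + Zt * (ax * Wx + a * Wxx) + Wx * Wxt + W * Wt + Z * Zt|
    ≤ (14 * K / m) * ((β * Wt ^ 2 + μ * Wxt ^ 2 + lam * Wxx ^ 2 + Wx ^ 2 + ρ * Zt ^ 2 + Zx ^ 2
      + W ^ 2 + Z ^ 2) / 2) := by
  set S := β * Wt ^ 2 + μ * Wxt ^ 2 + lam * Wxx ^ 2 + Wx ^ 2 + ρ * Zt ^ 2 + Zx ^ 2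
      + W ^ 2 + Z ^ 2 with hS
  have n1 : 0 ≤ lam * Wxx ^ 2 := mul_nonneg (by linarith) (sq_nonneg _)
  have n2 : 0 ≤ μ * Wxt ^ 2 := mul_nonneg (by linarith) (sq_nonneg _)
  have n3 : 0 ≤ ρ * Zt ^ 2 := mul_nonneg (by linarith) (sq_nonneg _)
  have n9 : 0 ≤ β * Wt ^ 2 := mul_nonneg (by linarith) (sq_nonneg _)
  have n4 := sq_nonneg Zx
  have n5 := sq_nonneg Wx
  have n8 := sq_nonneg W
  have n0 := sq_nonneg Z
  have b1 : Wxx ^ 2 ≤ S / m := dm hm hml (by linarith)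
  have b2 : Wxt ^ 2 ≤ S / m := dm hm hmμ (by linarith)
  have b3 : Zt ^ 2 ≤ S / m := dm hm hmρ (by linarith)
  have b4 : Zx ^ 2 ≤ S / m := dm hm hm1 (by linarith)
  have b5 : Wx ^ 2 ≤ S / m := dm hm hm1 (by linarith)
  have b8 : W ^ 2 ≤ S / m := dm hm hm1 (by linarith)
  have b9 : Wt ^ 2 ≤ S / m := dm hm hmβ (by linarith)
  have b0 : Z ^ 2 ≤ S / m := dm hm hm1 (by linarith)
  have h1 : |(1:ℝ)| ≤ K := by simpa using hK1
  have e : (14 * K / m) * (S / 2) = 7 * (K * (S / m)) := by ring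
  rw [e]
  have t1 := abs_le.1 (tm hA b2 b5)
  have t2 := abs_le.1 (tm hB b2 b4)
  have t3 := abs_le.1 (tm hax b3 b5)
  have t4 := abs_le.1 (tm ha b3 b1)
  have t5 := abs_le.1 (tm h1 b5 b2)
  have t6 := abs_le.1 (tm h1 b8 b9)
  have t7 := abs_le.1 (tm h1 b0 b3)
  rw [abs_le]
  constructor <;> linarith

theorem side {β μ lam ρ L₀ L T c : ℝ} (hβ : 0 < β) (hμ : 0 < μ) (hlam : 0 < lam) (hρ : 0 < ρ)
    (hc1 : 1 ≤ c) (hc2 : μ ≤ c * lam) (hc3 : ρ ≤ c) (hT : 0 < T)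
    (hTc : c * (L - L₀) < T / 4)
    {w z A B a : ℝ → ℝ → ℝ} (hw : Sm w) (hz : Sm z) (hA : Sm A) (hB : Sm B) (ha : Sm a)
    (eq1 : ∀ x ∈ Set.Icc L₀ L, ∀ t ∈ Set.Icc 0 T,
      β * pdt (pdt w) x t - μ * pdx (pdx (pdt (pdt w))) x t + lam * pdx (pdx (pdx (pdx w))) x t
        - pdx (fun y s => A y s * pdx w y s + B y s * pdx z y s) x t = 0)
    (eq2 : ∀ x ∈ Set.Icc L₀ L, ∀ t ∈ Set.Icc 0 T,
      ρ * pdt (pdt z) x t - (pdx (pdx z) x t + pdx (fun y s => a y s * pdx w y s) x t) = 0)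
    (b0 : ∀ t ∈ Set.Icc 0 T, w L₀ t = 0) (b1 : ∀ t ∈ Set.Icc 0 T, pdx w L₀ t = 0)
    (b2 : ∀ t ∈ Set.Icc 0 T, pdx (pdx w) L₀ t = 0)
    (b3 : ∀ t ∈ Set.Icc 0 T, pdx (pdx (pdx w)) L₀ t = 0)
    (c0 : ∀ t ∈ Set.Icc 0 T, z L₀ t = 0) (c1 : ∀ t ∈ Set.Icc 0 T, pdx z L₀ t = 0) :
    ∀ x ∈ Set.Icc L₀ L, w x (T / 2) = 0 ∧ pdx w x (T / 2) = 0 ∧ pdt w x (T / 2) = 0 ∧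
      pdx (pdx w) x (T / 2) = 0 ∧ pdt (pdx w) x (T / 2) = 0 ∧ z x (T / 2) = 0 ∧
      pdx z x (T / 2) = 0 ∧ pdt z x (T / 2) = 0 := by
  have hS : Sm (fun y s => A y s * pdx w y s + B y s * pdx z y s) :=
    (hA.mul hw.x).add (hB.mul hz.x)
  set S := (fun y s => A y s * pdx w y s + B y s * pdx z y s) with hSdef
  set p : ℝ → ℝ → ℝ := fun x t => lam * pdx (pdx w) x t - μ * pdt (pdt w) x t with hp
  have hps : Sm p := (hw.x.x.cmul lam).sub (hw.t.t.cmul μ)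
  set q : ℝ → ℝ → ℝ := fun x t => pdx p x t + β * lam / μ * pdx w x t - S x t with hq
  have hqs : Sm q := (hps.x.add (hw.x.cmul _)).sub hS
  have px : ∀ x t, pdx p x t = lam * pdx (pdx (pdx w)) x t - μ * pdx (pdt (pdt w)) x t :=
    fun x t => (((hw.x.x.dx x t).const_mul lam).sub ((hw.t.t.dx x t).const_mul μ)).deriv
  have pxf : pdx p = fun x t => lam * pdx (pdx (pdx w)) x t - μ * pdx (pdt (pdt w)) x t := by
    ext x t; exact px x t
  have pxx : ∀ x t, pdx (pdx p) x t
      = lam * pdx (pdx (pdx (pdx w))) x t - μ * pdx (pdx (pdt (pdt w))) x t := by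
    intro x t
    rw [pxf]
    exact (((hw.x.x.x.dx x t).const_mul lam).sub ((hw.t.t.x.dx x t).const_mul μ)).deriv
  have qx : ∀ x ∈ Set.Icc L₀ L, ∀ t ∈ Set.Icc 0 T, pdx q x t = β / μ * p x t := by
    intro x hx t ht
    have h1 : pdx q x t = pdx (pdx p) x t + β * lam / μ * pdx (pdx w) x t - pdx S x t :=
      (((hps.x.dx x t).add ((hw.x.dx x t).const_mul _)).sub (hS.dx x t)).deriv
    have h2 := eq1 x hx t ht
    rw [h1, pxx]
    simp only [hp]
    field_simp
    linear_combination μ * h2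
  set e : ℝ → ℝ → ℝ := fun x t => (lam * pdx (pdx w) x t ^ 2 + μ * pdt (pdx w) x t ^ 2
    + pdx z x t ^ 2 + ρ * pdt z x t ^ 2 + pdx w x t ^ 2 + p x t ^ 2 + q x t ^ 2
    + w x t ^ 2 + pdt w x t ^ 2 + z x t ^ 2) / 2 with he
  have hes : Sm e := by
    have := ((((((((((hw.x.x.pow 2).cmul lam).add ((hw.x.t.pow 2).cmul μ)).add
      (hz.x.pow 2)).add ((hz.t.pow 2).cmul ρ)).add (hw.x.pow 2)).add (hps.pow 2)).add
      (hqs.pow 2)).add (hw.pow 2)).add (hw.t.pow 2)).add (hz.pow 2)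
    exact ContDiff.div_const this 2
  set f : ℝ → ℝ → ℝ := fun x t => μ * (pdx (pdx w) x t * pdt (pdx w) x t)
    + ρ * (pdx z x t * pdt z x t) with hf
  have hfs : Sm f := ((hw.x.x.mul hw.x.t).cmul μ).add ((hz.x.mul hz.t).cmul ρ)
  have hpos : ∀ x t, 0 ≤ e x t := by
    intro x t; simp only [he]; positivity
  obtain ⟨K1, hK1⟩ := hA.bdd L₀ L 0 T
  obtain ⟨K2, hK2⟩ := hB.bdd L₀ L 0 T
  obtain ⟨K3, hK3⟩ := ha.bdd L₀ L 0 T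
  obtain ⟨K4, hK4⟩ := ha.x.bdd L₀ L 0 T
  set K := 1 + |K1| + |K2| + |K3| + |K4| + |β * lam / μ| + |β / μ| with hK
  have m0 := abs_nonneg K1
  have m1 := abs_nonneg K2
  have m2 := abs_nonneg K3
  have m3 := abs_nonneg K4
  have m4 := abs_nonneg (β * lam / μ)
  have m5 := abs_nonneg (β / μ)
  set m := min 1 (min μ (min lam ρ)) with hm
  have hm0 : 0 < m := by simp [hm, hμ, hlam, hρ]
  have hφs := wt_sm T c L₀
  have fin := energyW (a := L₀) (b := L) (r0 := 0) (r1 := T) (C := 30 * K / m) (c := c)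
    hes hfs hφs hT ?_ ?_ (fun s _ r hr => wt_ineq (by linarith) s r hr) ?_ ?_
    (fun s r => expNegInvGlue.nonneg _) hpos ?_
  · intro x hx
    have hT2 : T / 2 ∈ Set.Icc 0 T := ⟨by linarith, by linarith⟩
    have h1 := fin x hx (T / 2) hT2
    have h2 : 0 < wt T c L₀ x (T / 2) := by
      apply expNegInvGlue.pos_of_pos
      have h3 : c * (x - L₀) ≤ c * (L - L₀) :=
        mul_le_mul_of_nonneg_left (by linarith [hx.2]) (by linarith)
      have h4 : T * (c * (x - L₀)) < T * (T / 4) :=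
        mul_lt_mul_of_pos_left (by linarith) hT
      nlinarith
    have h3 : e x (T / 2) = 0 := by
      rcases mul_eq_zero.1 h1 with h | h
      · exact absurd h h2.ne'
      · exact h
    simp only [he] at h3
    have n1 : 0 ≤ lam * pdx (pdx w) x (T / 2) ^ 2 := by positivity
    have n2 : 0 ≤ μ * pdt (pdx w) x (T / 2) ^ 2 := by positivity
    have n3 : 0 ≤ ρ * pdt z x (T / 2) ^ 2 := by positivity
    have n4 := sq_nonneg (pdx z x (T / 2))
    have n5 := sq_nonneg (pdx w x (T / 2))
    have n6 := sq_nonneg (p x (T / 2))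
    have n7 := sq_nonneg (q x (T / 2))
    have n8 := sq_nonneg (w x (T / 2))
    have n9 := sq_nonneg (pdt w x (T / 2))
    have n0 := sq_nonneg (z x (T / 2))
    have z0 : ∀ y : ℝ, y ^ 2 ≤ 0 → y = 0 := fun y hy => by
      have := le_antisymm hy (sq_nonneg y)
      simpa using this
    have z1 : ∀ k y : ℝ, 0 < k → k * y ^ 2 ≤ 0 → y = 0 := fun k y hk hy => by
      apply z0; by_contra h; push Not at h; have := mul_pos hk h; linarith
    refine ⟨z0 _ (by linarith), z0 _ (by linarith), z0 _ (by linarith), z1 lam _ hlam (by linarith),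
      z1 μ _ hμ (by linarith), z0 _ (by linarith), z0 _ (by linarith), z1 ρ _ hρ (by linarith)⟩
  · intro x hx t ht
    have hex : pdx e x t = (lam * (2 * pdx (pdx w) x t * pdx (pdx (pdx w)) x t)
        + μ * (2 * pdt (pdx w) x t * pdx (pdt (pdx w)) x t)
        + 2 * pdx z x t * pdx (pdx z) x t + ρ * (2 * pdt z x t * pdx (pdt z) x t)
        + 2 * pdx w x t * pdx (pdx w) x t + 2 * p x t * pdx p x t + 2 * q x t * pdx q x t
        + 2 * w x t * pdx w x t + 2 * pdt w x t * pdx (pdt w) x t + 2 * z x t * pdx z x t) / 2 :=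
      (((((((((((((hw.x.x.sqx x t).const_mul lam).add ((hw.x.t.sqx x t).const_mul μ)).add
      (hz.x.sqx x t)).add ((hz.t.sqx x t).const_mul ρ)).add (hw.x.sqx x t)).add
      (hps.sqx x t)).add (hqs.sqx x t)).add (hw.sqx x t)).add (hw.t.sqx x t)).add
      (hz.sqx x t)).div_const 2)).deriv
    have hft : pdt f x t = μ * (pdt (pdx (pdx w)) x t * pdt (pdx w) x t
          + pdx (pdx w) x t * pdt (pdt (pdx w)) x t)
        + ρ * (pdt (pdx z) x t * pdt z x t + pdx z x t * pdt (pdt z) x t) :=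
      ((((hw.x.x.dt x t).mul (hw.x.t.dt x t)).const_mul μ).add
        (((hz.x.dt x t).mul (hz.t.dt x t)).const_mul ρ)).deriv
    have hR : pdx (fun y s => a y s * pdx w y s) x t
        = pdx a x t * pdx w x t + a x t * pdx (pdx w) x t :=
      ((ha.dx x t).mul (hw.x.dx x t)).deriv
    have e2 := eq2 x hx t ht
    rw [hR] at e2
    have hpx : pdx p x t = q x t - β * lam / μ * pdx w x t + S x t := by simp only [hq]; ring
    have hpx2 := px x t
    rw [hw.t.comm, hw.comm] at hpx2
    have key := alg_side (μ := μ) (lam := lam) (ρ := ρ) (m := m) (K := K) (k := β * lam / μ)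
      (Wxx := pdx (pdx w) x t) (Wxt := pdt (pdx w) x t) (Zx := pdx z x t) (Zt := pdt z x t)
      (Wx := pdx w x t) (P := p x t) (Q := q x t) (W := w x t) (Wt := pdt w x t) (Z := z x t)
      (A := A x t) (B := B x t) (a := a x t) (ax := pdx a x t) (b := β / μ)
      hm0 (by simp [hm]) (by simp [hm]) (by simp [hm]) (by simp [hm]) (by linarith)
      (by linarith [hK1 x hx t ht, le_abs_self K1]) (by linarith [hK2 x hx t ht, le_abs_self K2])
      (by linarith [hK3 x hx t ht, le_abs_self K3]) (by linarith [hK4 x hx t ht, le_abs_self K4])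
      (by linarith) (by linarith)
    have hSx : S x t = A x t * pdx w x t + B x t * pdx z x t := rfl
    rw [← hSx, ← hpx] at key
    refine le_trans (le_of_eq ?_) (add_le_add_left key (pdt f x t))
    rw [hex, hft, qx x hx t ht, hw.x.comm, hw.comm, hz.comm]
    linear_combination (-pdx z x t) * e2 - pdx (pdx w) x t * hpx2
  · intro x hx t ht
    simp only [hf, he]
    set X := pdx (pdx w) x t
    set Y := pdt (pdx w) x t
    set U := pdx z x t
    set V := pdt z x t
    have r1 : 0 ≤ c * (pdx w x t ^ 2 + p x t ^ 2 + q x t ^ 2 + w x t ^ 2 + pdt w x t ^ 2 +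
      z x t ^ 2) := by positivity
    have r2 : μ * X ^ 2 ≤ c * lam * X ^ 2 := mul_le_mul_of_nonneg_right hc2 (sq_nonneg _)
    have r3 : μ * Y ^ 2 ≤ c * (μ * Y ^ 2) := le_mul_of_one_le_left (by positivity) hc1
    have r4 : ρ * U ^ 2 ≤ c * U ^ 2 := mul_le_mul_of_nonneg_right hc3 (sq_nonneg _)
    have r5 : ρ * V ^ 2 ≤ c * (ρ * V ^ 2) := le_mul_of_one_le_left (by positivity) hc1
    have s1 : 0 ≤ μ * (X - Y) ^ 2 := by positivity
    have s2 : 0 ≤ μ * (X + Y) ^ 2 := by positivity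
    have s3 : 0 ≤ ρ * (U - V) ^ 2 := by positivity
    have s4 : 0 ≤ ρ * (U + V) ^ 2 := by positivity
    rw [abs_le]
    constructor <;> linarith
  · intro x hx
    apply expNegInvGlue.zero_of_nonpos
    have : 0 ≤ c * T * (x - L₀) := mul_nonneg (by positivity) (by linarith [hx.1])
    linarith
  · intro x hx
    apply expNegInvGlue.zero_of_nonpos
    have : 0 ≤ c * T * (x - L₀) := mul_nonneg (by positivity) (by linarith [hx.1])
    linarith
  · intro t ht
    have d0 := pdt_zero hw hT b0
    have d00 := pdt_zero hw.t hT d0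
    have d1 := pdt_zero hw.x hT b1
    have d11 := pdt_zero hw.x.t hT d1
    have f0 := pdt_zero hz hT c0
    have hp0 : p L₀ t = 0 := by simp [hp, b2 t ht, d00 t ht]
    have hpx0 : pdx p L₀ t = 0 := by
      rw [px, hw.t.comm, hw.comm, b3 t ht, d11 t ht]; simp
    have hq0 : q L₀ t = 0 := by
      simp [hq, hpx0, hSdef, b1 t ht, c1 t ht]
    simp [he, hp0, hq0, b0 t ht, b1 t ht, b2 t ht, c0 t ht, c1 t ht, d0 t ht, d1 t ht, f0 t ht]

theorem timeEv {β μ lam ρ L₀ L T : ℝ} (hβ : 0 < β) (hμ : 0 < μ) (hlam : 0 < lam) (hρ : 0 < ρ)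
    (hL : L₀ < L) (hT : 0 < T)
    {w z A B a : ℝ → ℝ → ℝ} (hw : Sm w) (hz : Sm z) (hA : Sm A) (hB : Sm B) (ha : Sm a)
    (eq1 : ∀ x ∈ Set.Icc L₀ L, ∀ t ∈ Set.Icc 0 T,
      β * pdt (pdt w) x t - μ * pdx (pdx (pdt (pdt w))) x t + lam * pdx (pdx (pdx (pdx w))) x t
        - pdx (fun y s => A y s * pdx w y s + B y s * pdx z y s) x t = 0)
    (eq2 : ∀ x ∈ Set.Icc L₀ L, ∀ t ∈ Set.Icc 0 T,
      ρ * pdt (pdt z) x t - (pdx (pdx z) x t + pdx (fun y s => a y s * pdx w y s) x t) = 0)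
    (b0 : ∀ t ∈ Set.Icc 0 T, w L₀ t = 0) (b2 : ∀ t ∈ Set.Icc 0 T, pdx (pdx w) L₀ t = 0)
    (c0 : ∀ t ∈ Set.Icc 0 T, z L₀ t = 0)
    (b0' : ∀ t ∈ Set.Icc 0 T, w L t = 0) (b2' : ∀ t ∈ Set.Icc 0 T, pdx (pdx w) L t = 0)
    (c0' : ∀ t ∈ Set.Icc 0 T, z L t = 0)
    (ini : ∀ x ∈ Set.Icc L₀ L, w x (T / 2) = 0 ∧ pdx w x (T / 2) = 0 ∧ pdt w x (T / 2) = 0 ∧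
      pdx (pdx w) x (T / 2) = 0 ∧ pdt (pdx w) x (T / 2) = 0 ∧ z x (T / 2) = 0 ∧
      pdx z x (T / 2) = 0 ∧ pdt z x (T / 2) = 0) :
    ∀ x ∈ Set.Icc L₀ L, ∀ t ∈ Set.Icc 0 T, w x t = 0 ∧ z x t = 0 := by
  have hS : Sm (fun y s => A y s * pdx w y s + B y s * pdx z y s) :=
    (hA.mul hw.x).add (hB.mul hz.x)
  set S := (fun y s => A y s * pdx w y s + B y s * pdx z y s) with hSdef
  set e : ℝ → ℝ → ℝ := fun x t => (β * pdt w x t ^ 2 + μ * pdt (pdx w) x t ^ 2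
    + lam * pdx (pdx w) x t ^ 2 + pdx w x t ^ 2 + ρ * pdt z x t ^ 2 + pdx z x t ^ 2
    + w x t ^ 2 + z x t ^ 2) / 2 with he
  have hes : Sm e := by
    have := ((((((((hw.t.pow 2).cmul β).add ((hw.x.t.pow 2).cmul μ)).add
      ((hw.x.x.pow 2).cmul lam)).add (hw.x.pow 2)).add ((hz.t.pow 2).cmul ρ)).add
      (hz.x.pow 2)).add (hw.pow 2)).add (hz.pow 2)
    exact ContDiff.div_const this 2
  set F : ℝ → ℝ → ℝ := fun x t => μ * (pdt w x t * pdt (pdt (pdx w)) x t)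
    - lam * (pdt w x t * pdx (pdx (pdx w)) x t) + lam * (pdt (pdx w) x t * pdx (pdx w) x t)
    + pdt w x t * S x t + pdt z x t * pdx z x t with hF
  have hFs : Sm F := (((((hw.t.mul hw.x.t.t).cmul μ).sub ((hw.t.mul hw.x.x.x).cmul lam)).add
    ((hw.x.t.mul hw.x.x).cmul lam)).add (hw.t.mul hS)).add (hz.t.mul hz.x)
  have hpos : ∀ x t, 0 ≤ e x t := by
    intro x t; simp only [he]; positivity
  obtain ⟨K1, hK1⟩ := hA.bdd L₀ L 0 T
  obtain ⟨K2, hK2⟩ := hB.bdd L₀ L 0 T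
  obtain ⟨K3, hK3⟩ := ha.bdd L₀ L 0 T
  obtain ⟨K4, hK4⟩ := ha.x.bdd L₀ L 0 T
  set K := 1 + |K1| + |K2| + |K3| + |K4| with hK
  have m0 := abs_nonneg K1
  have m1 := abs_nonneg K2
  have m2 := abs_nonneg K3
  have m3 := abs_nonneg K4
  set m := min 1 (min μ (min lam (min ρ β))) with hm
  have hm0 : 0 < m := by simp [hm, hμ, hlam, hρ, hβ]
  have fin := energyT (T := T) (C := 14 * K / m) (t₀ := T / 2) hes hFs hL
    ⟨by linarith, by linarith⟩ ?_ ?_ ?_ hpos ?_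
  · intro x hx t ht
    have h3 := fin x hx t ht
    simp only [he] at h3
    have n1 : 0 ≤ lam * pdx (pdx w) x t ^ 2 := by positivity
    have n2 : 0 ≤ μ * pdt (pdx w) x t ^ 2 := by positivity
    have n3 : 0 ≤ ρ * pdt z x t ^ 2 := by positivity
    have n9 : 0 ≤ β * pdt w x t ^ 2 := by positivity
    have n4 := sq_nonneg (pdx z x t)
    have n5 := sq_nonneg (pdx w x t)
    have n8 := sq_nonneg (w x t)
    have n0 := sq_nonneg (z x t)
    have z0 : ∀ y : ℝ, y ^ 2 ≤ 0 → y = 0 := fun y hy => by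
      have := le_antisymm hy (sq_nonneg y)
      simpa using this
    exact ⟨z0 _ (by linarith), z0 _ (by linarith)⟩
  · intro x hx t ht
    have het : pdt e x t = (β * (2 * pdt w x t * pdt (pdt w) x t)
        + μ * (2 * pdt (pdx w) x t * pdt (pdt (pdx w)) x t)
        + lam * (2 * pdx (pdx w) x t * pdt (pdx (pdx w)) x t)
        + 2 * pdx w x t * pdt (pdx w) x t + ρ * (2 * pdt z x t * pdt (pdt z) x t)
        + 2 * pdx z x t * pdt (pdx z) x t
        + 2 * w x t * pdt w x t + 2 * z x t * pdt z x t) / 2 :=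
      (((((((((((hw.t.sqt x t).const_mul β).add ((hw.x.t.sqt x t).const_mul μ)).add
      ((hw.x.x.sqt x t).const_mul lam)).add (hw.x.sqt x t)).add ((hz.t.sqt x t).const_mul ρ)).add
      (hz.x.sqt x t)).add (hw.sqt x t)).add (hz.sqt x t)).div_const 2)).deriv
    have hFx : pdx F x t = μ * (pdx (pdt w) x t * pdt (pdt (pdx w)) x t
          + pdt w x t * pdx (pdt (pdt (pdx w))) x t)
        - lam * (pdx (pdt w) x t * pdx (pdx (pdx w)) x t
          + pdt w x t * pdx (pdx (pdx (pdx w))) x t)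
        + lam * (pdx (pdt (pdx w)) x t * pdx (pdx w) x t
          + pdt (pdx w) x t * pdx (pdx (pdx w)) x t)
        + (pdx (pdt w) x t * S x t + pdt w x t * pdx S x t)
        + (pdx (pdt z) x t * pdx z x t + pdt z x t * pdx (pdx z) x t) :=
      ((((((((hw.t.dx x t).mul (hw.x.t.t.dx x t)).const_mul μ).sub
        (((hw.t.dx x t).mul (hw.x.x.x.dx x t)).const_mul lam)).add
        (((hw.x.t.dx x t).mul (hw.x.x.dx x t)).const_mul lam)).add
        ((hw.t.dx x t).mul (hS.dx x t))).add ((hz.t.dx x t).mul (hz.x.dx x t)))).deriv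
    have hR : pdx (fun y s => a y s * pdx w y s) x t
        = pdx a x t * pdx w x t + a x t * pdx (pdx w) x t :=
      ((ha.dx x t).mul (hw.x.dx x t)).deriv
    have e2 := eq2 x hx t ht
    rw [hR] at e2
    have e1 := eq1 x hx t ht
    rw [hw.t.comm, hw.comm] at e1
    have key := alg_time (β := β) (μ := μ) (lam := lam) (ρ := ρ) (m := m) (K := K)
      (Wxx := pdx (pdx w) x t) (Wxt := pdt (pdx w) x t) (Zx := pdx z x t) (Zt := pdt z x t)
      (Wx := pdx w x t) (W := w x t) (Wt := pdt w x t) (Z := z x t)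
      (A := A x t) (B := B x t) (a := a x t) (ax := pdx a x t)
      hm0 (by simp [hm]) (by simp [hm]) (by simp [hm]) (by simp [hm]) (by simp [hm]) (by linarith)
      (by linarith [hK1 x hx t ht, le_abs_self K1]) (by linarith [hK2 x hx t ht, le_abs_self K2])
      (by linarith [hK3 x hx t ht, le_abs_self K3]) (by linarith [hK4 x hx t ht, le_abs_self K4])
    have hSx : S x t = A x t * pdx w x t + B x t * pdx z x t := rfl
    refine le_trans (le_of_eq ?_) key
    congr 1
    rw [het, hFx, ← hSx, hw.x.comm, hw.comm, hz.comm]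
    linear_combination (pdt w x t) * e1 + pdt z x t * e2
  · intro t ht
    simp [hF, pdt_zero hw hT b0 t ht, b2 t ht, pdt_zero hz hT c0 t ht]
  · intro t ht
    simp [hF, pdt_zero hw hT b0' t ht, b2' t ht, pdt_zero hz hT c0' t ht]
  · intro x hx
    obtain ⟨i1, i2, i3, i4, i5, i6, i7, i8⟩ := ini x hx
    simp [he, i1, i2, i3, i4, i5, i6, i7, i8]

/-- Unique continuation for the overdetermined elastic von Karman beam problem:
for `T` large enough (depending only on the data), the time difference of an
`M`-bounded solution satisfying the overdetermined boundary conditions vanishes. -/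
theorem stmt_17 (L₀ L β₂ μ₂ lam₂ ρ₂ h M : ℝ)
    (hL₀ : 0 < L₀) (hL : L₀ < L)
    (hβ₂ : 0 < β₂) (hμ₂ : 0 < μ₂) (hlam₂ : 0 < lam₂) (hρ₂ : 0 < ρ₂)
    (hh : 0 < h) (hM : 0 < M) :
    ∃ T₀ > (0:ℝ), ∀ T : ℝ, T₀ ≤ T →
      ∀ u v : ℝ → ℝ → ℝ,
        (∀ n : ℕ, ContDiff ℝ n (Function.uncurry u)) →
        (∀ n : ℕ, ContDiff ℝ n (Function.uncurry v)) →
        VKBeam β₂ μ₂ lam₂ ρ₂ L₀ L (T + h) u v →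
        MBounded M L₀ L (T + h) u → MBounded M L₀ L (T + h) v →
        (∀ t ∈ Set.Icc (0:ℝ) T,
          tdiff h u L₀ t = 0 ∧ pdx (tdiff h u) L₀ t = 0 ∧
          pdx (pdx (tdiff h u)) L₀ t = 0 ∧ pdx (pdx (pdx (tdiff h u))) L₀ t = 0 ∧
          tdiff h v L₀ t = 0 ∧ pdx (tdiff h v) L₀ t = 0 ∧
          tdiff h u L t = 0 ∧ pdx (pdx (tdiff h u)) L t = 0 ∧ tdiff h v L t = 0) →
        ∀ x ∈ Set.Icc L₀ L, ∀ t ∈ Set.Icc (0:ℝ) T,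
          tdiff h u x t = 0 ∧ tdiff h v x t = 0 := by
  set c := 1 + μ₂ / lam₂ + ρ₂ with hc
  have hr : 0 < μ₂ / lam₂ := div_pos hμ₂ hlam₂
  have hc0 : 0 < c := by linarith
  refine ⟨4 * (c * (L - L₀)) + 1, by have := mul_pos hc0 (sub_pos.2 hL); linarith, ?_⟩
  intro T hT u v hu hv hVK _ _ hb
  have hT0 : 0 < T := by have := mul_pos hc0 (sub_pos.2 hL); linarith
  replace hu := Sm.of_nat hu
  replace hv := Sm.of_nat hv
  have hw := hu.tdiff h
  have hz := hv.tdiff h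
  set w := tdiff h u with hwd
  set z := tdiff h v with hzd
  set a : ℝ → ℝ → ℝ := fun x t => 2⁻¹ * (pdx u x (t + h) + pdx u x t) with ha
  have has : Sm a := ((hu.x.shift h).add hu.x).cmul _
  set N : ℝ → ℝ → ℝ := fun y s => pdx v y s + (pdx u y s) ^ 2 / 2 with hN
  have hNs : Sm N := hv.x.add (ContDiff.div_const (hu.x.pow 2) 2)
  set A : ℝ → ℝ → ℝ := fun x t => N x (t + h) + pdx u x t * a x t with hA
  have hAs : Sm A := (hNs.shift h).add (hu.x.mul has)
  have hJ : Sm (fun y s => pdx u y s * N y s) := hu.x.mul hNs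
  have hS : (fun y s => A y s * pdx w y s + pdx u y s * pdx z y s)
      = tdiff h (fun y s => pdx u y s * N y s) := by
    ext x t
    rw [hwd, hzd, hu.pdx_tdiff, hv.pdx_tdiff]
    simp only [hA, hN, ha, tdiff]
    ring
  have hR : (fun y s => pdx z y s + a y s * pdx w y s) = tdiff h N := by
    ext x t
    rw [hwd, hzd, hu.pdx_tdiff, hv.pdx_tdiff]
    simp only [hN, ha, tdiff]
    ring
  have eq1 : ∀ x ∈ Set.Icc L₀ L, ∀ t ∈ Set.Icc 0 T,
      β₂ * pdt (pdt w) x t - μ₂ * pdx (pdx (pdt (pdt w))) x t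
        + lam₂ * pdx (pdx (pdx (pdx w))) x t
        - pdx (fun y s => A y s * pdx w y s + pdx u y s * pdx z y s) x t = 0 := by
    intro x hx t ht
    have h1 := (hVK x hx t ⟨ht.1, by linarith [ht.2]⟩).1
    have h2 := (hVK x hx (t + h) ⟨by linarith [ht.1], by linarith [ht.2]⟩).1
    rw [hS, hwd, hJ.pdx_tdiff, hu.pdt_tdiff, hu.t.pdt_tdiff, hu.t.t.pdx_tdiff, hu.t.t.x.pdx_tdiff,
      hu.pdx_tdiff, hu.x.pdx_tdiff, hu.x.x.pdx_tdiff, hu.x.x.x.pdx_tdiff]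
    simp only [tdiff]
    linear_combination h2 - h1
  have eq2 : ∀ x ∈ Set.Icc L₀ L, ∀ t ∈ Set.Icc 0 T,
      ρ₂ * pdt (pdt z) x t - (pdx (pdx z) x t + pdx (fun y s => a y s * pdx w y s) x t) = 0 := by
    intro x hx t ht
    have h1 := (hVK x hx t ⟨ht.1, by linarith [ht.2]⟩).2
    have h2 := (hVK x hx (t + h) ⟨by linarith [ht.1], by linarith [ht.2]⟩).2
    have h3 : pdx (fun y s => pdx z y s + a y s * pdx w y s) x t
        = pdx (pdx z) x t + pdx (fun y s => a y s * pdx w y s) x t :=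
      ((hz.x.dx x t).add ((has.mul hw.x).dx x t)).deriv
    rw [← h3, hR, hzd, hNs.pdx_tdiff, hv.pdt_tdiff, hv.t.pdt_tdiff]
    simp only [tdiff]
    linear_combination h2 - h1
  have ini := side (T := T) (c := c) hβ₂ hμ₂ hlam₂ hρ₂ (by linarith)
    (by
      have : c * lam₂ = lam₂ + μ₂ + ρ₂ * lam₂ := by rw [hc]; field_simp
      have := mul_pos hρ₂ hlam₂
      linarith)
    (by linarith) hT0 (by linarith) hw hz hAs hu.x has eq1 eq2
    (fun t ht => (hb t ht).1) (fun t ht => (hb t ht).2.1) (fun t ht => (hb t ht).2.2.1)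
    (fun t ht => (hb t ht).2.2.2.1) (fun t ht => (hb t ht).2.2.2.2.1)
    (fun t ht => (hb t ht).2.2.2.2.2.1)
  exact timeEv hβ₂ hμ₂ hlam₂ hρ₂ hL hT0 hw hz hAs hu.x has eq1 eq2
    (fun t ht => (hb t ht).1) (fun t ht => (hb t ht).2.2.1) (fun t ht => (hb t ht).2.2.2.2.1)
    (fun t ht => (hb t ht).2.2.2.2.2.2.1) (fun t ht => (hb t ht).2.2.2.2.2.2.2.1)
    (fun t ht => (hb t ht).2.2.2.2.2.2.2.2) ini
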